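/- For every f ∈ H^{−1}(Ω) one has ‖(1 − P_h′) f‖_{(H²(Ω) ∩ H¹₀(Ω))′} ≲ h · min_{f_h ∈ 𝒫⁰(𝒯)} ‖f − f_h‖_{H^{−1}(Ω)}. -/

import Mathlib

/-!
Abstract framework for minimum residual finite element methods (MINRES FEM)
for the Poisson problem, following
"MINRES for second-order PDEs with singular data" by Führer, Heuer, Karkulik.

The Sobolev spaces on a bounded polytopal Lipschitz domain `Ω ⊂ ℝ^d`
(`d = 2, 3`), the interpolation scale of (dual) Sobolev norms, the weak
solution operator of the Poisson problem together with its regularity shift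
`s_Ω`, and the discrete spaces and (regularization) operators attached to a
shape-regular (quasi-uniform) simplicial mesh are axiomatized.
-/

noncomputable section

open scoped RealInnerProductSpace

/-- The functional-analytic setting of the Poisson problem with homogeneous
Dirichlet boundary conditions on a bounded polytopal Lipschitz domain
`Ω ⊂ ℝ^d` (`d = 2, 3`). -/
structure PoissonSetting where
  /-- the space dimension `d` -/
  d : ℕ
  dim_eq : d = 2 ∨ d = 3
  /-- `L²(Ω)` -/
  L2 : Type
  [instL2 : NormedAddCommGroup L2]
  [instL2i : InnerProductSpace ℝ L2]
  /-- `L²(Ω)^d` -/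
  L2v : Type
  [instL2v : NormedAddCommGroup L2v]
  [instL2vi : InnerProductSpace ℝ L2v]
  /-- `H¹₀(Ω)`, normed by `v ↦ ‖∇v‖` -/
  H10 : Type
  [instH10 : NormedAddCommGroup H10]
  [instH10s : NormedSpace ℝ H10]
  /-- the gradient `∇ : H¹₀(Ω) → L²(Ω)^d` -/
  grad : H10 →L[ℝ] L2v
  /-- the embedding `H¹₀(Ω) ⊆ L²(Ω)` -/
  inclH10 : H10 →L[ℝ] L2
  /-- `H¹₀(Ω)` carries the norm `‖∇ ⬝ ‖` -/
  norm_H10 : ∀ v : H10, ‖v‖ = ‖grad v‖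
  /-- `H(div; Ω)` -/
  Hdiv : Type
  [instHdiv : NormedAddCommGroup Hdiv]
  [instHdivs : NormedSpace ℝ Hdiv]
  /-- the divergence `div : H(div; Ω) → L²(Ω)` -/
  dvg : Hdiv →L[ℝ] L2
  /-- the embedding `H(div; Ω) ⊆ L²(Ω)^d` -/
  inclHdiv : Hdiv →L[ℝ] L2v
  /-- membership in the interpolation space `H^{-1+s}(Ω)` (for `s ∈ [0,1]`),
  viewed inside `H^{-1}(Ω) = (H¹₀(Ω))'` -/
  memHm : ℝ → (H10 →L[ℝ] ℝ) → Prop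
  /-- the `H^{-1+s}(Ω)`-norm on `H^{-1}(Ω) = (H¹₀(Ω))'` -/
  normHm : ℝ → (H10 →L[ℝ] ℝ) → ℝ
  /-- `H^{-1+0}(Ω) = H^{-1}(Ω)` is the full dual space -/
  memHm_zero : ∀ φ, memHm 0 φ
  /-- the `H^{-1+0}(Ω)`-norm is the dual norm
  `‖φ‖ = sup_{0≠v∈H¹₀(Ω)} ⟨φ,v⟩/‖∇v‖` -/
  normHm_zero : ∀ φ, normHm 0 φ = ‖φ‖
  /-- membership in `H^{1+s}(Ω) ∩ H¹₀(Ω)` -/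
  memH1p : ℝ → H10 → Prop
  /-- the `H^{1+s}(Ω)`-norm -/
  normH1p : ℝ → H10 → ℝ
  /-- membership in `H²(Ω) ∩ H¹₀(Ω)` -/
  memH2 : H10 → Prop
  /-- the `H²(Ω)`-norm -/
  normH2 : H10 → ℝ
  /-- the weak solution operator of `-Δu = f`, `u|_Γ = 0` -/
  solve : (H10 →L[ℝ] ℝ) → H10
  /-- weak formulation: `(∇(solve f), ∇v) = ⟨f, v⟩` for all `v ∈ H¹₀(Ω)` -/
  solve_spec : ∀ f v, ⟪grad (solve f) , grad v⟫ = f v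
  /-- the regularity shift `s_Ω` of the Poisson problem on `Ω` -/
  sOmega : ℝ
  sOmega_gt : 1/2 < sOmega
  sOmega_le : sOmega ≤ 1

attribute [instance] PoissonSetting.instL2 PoissonSetting.instL2i
  PoissonSetting.instL2v PoissonSetting.instL2vi PoissonSetting.instH10
  PoissonSetting.instH10s PoissonSetting.instHdiv PoissonSetting.instHdivs

namespace PoissonSetting

/-- `H^{-1}(Ω) := (H¹₀(Ω))'`, with the dual norm
`‖φ‖_{H^{-1}(Ω)} = sup_{0 ≠ v ∈ H¹₀(Ω)} ⟨φ, v⟩ / ‖∇v‖`. -/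
abbrev Hm1 (S : PoissonSetting) : Type := S.H10 →L[ℝ] ℝ

variable (S : PoissonSetting)

/-- a function `g ∈ L²(Ω)` viewed as an element of `H^{-1}(Ω)` (with `L²(Ω)`
as pivot space) -/
def toHm1 (g : S.L2) : S.Hm1 := (innerSL ℝ g).comp S.inclH10

/-- the `H¹(Ω)`-norm on `H¹₀(Ω)`: `‖v‖²_{H¹} = ‖v‖² + ‖∇v‖²` -/
def normH1 (v : S.H10) : ℝ := Real.sqrt (‖S.inclH10 v‖ ^ 2 + ‖S.grad v‖ ^ 2)

/-- the `H(div;Ω)`-norm: `‖τ‖²_{H(div)} = ‖τ‖² + ‖div τ‖²` -/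
def normHdiv (τ : S.Hdiv) : ℝ := Real.sqrt (‖S.inclHdiv τ‖ ^ 2 + ‖S.dvg τ‖ ^ 2)

/-- the norm of the dual space `(H²(Ω) ∩ H¹₀(Ω))'`, with `L²(Ω)` as pivot
space -/
def normH2dual (φ : S.Hm1) : ℝ :=
  sSup ((fun v => |φ v|) '' {v : S.H10 | S.memH2 v ∧ S.normH2 v ≤ 1})

/-- the regularity shift of the Poisson problem:
`‖u‖_{H^{1+s}(Ω)} ≲ ‖f‖_{H^{-1+s}(Ω)}` for all `0 ≤ s ≤ s_Ω` -/
def RegShift : Prop :=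
  ∃ C > 0, ∀ s, 0 ≤ s → s ≤ S.sOmega → ∀ f, S.memHm s f →
    S.memH1p s (S.solve f) ∧ S.normH1p s (S.solve f) ≤ C * S.normHm s f

/-- `Ω` is convex: the regularity shift is `s_Ω = 1` and the Poisson problem
is `H²(Ω)`-regular -/
def Convex : Prop :=
  S.sOmega = 1 ∧ ∃ C > 0, ∀ g : S.L2,
    S.memH2 (S.solve (S.toHm1 g)) ∧ S.normH2 (S.solve (S.toHm1 g)) ≤ C * ‖g‖

/-- the scale is anchored at `s = 1`: `H^{-1+1}(Ω) = L²(Ω)` with equal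
norms -/
def ScaleL2 : Prop :=
  ∀ g : S.L2, S.memHm 1 (S.toHm1 g) ∧ S.normHm 1 (S.toHm1 g) = ‖g‖

/-- `L²(Ω)` functions belong to every space `H^{-1+s}(Ω)`, `s ∈ [0,1]` -/
def MemScale : Prop :=
  ∀ s, 0 ≤ s → s ≤ 1 → ∀ g : S.L2, S.memHm s (S.toHm1 g)

end PoissonSetting

/-- A regular (shape-regular, quasi-uniform) simplicial mesh `𝒯` of `Ω`,
together with its discrete spaces and the associated quasi-interpolation and
regularization operators. -/
structure Mesh (S : PoissonSetting) where
  /-- the (maximal) mesh-size `h` -/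
  h : ℝ
  h_pos : 0 < h
  /-- the set `𝒱₀` of interior vertices of `𝒯` -/
  Vtx : Type
  [instVtx : Fintype Vtx]
  /-- the position of an interior vertex `z ∈ 𝒱₀` -/
  vertexPos : Vtx → Fin S.d → ℝ
  /-- the center of mass `s_z` of the vertex patch `ω(z)` -/
  patchCentroid : Vtx → Fin S.d → ℝ
  /-- the hat function `η_z` associated with an interior vertex `z` -/
  hat : Vtx → S.H10
  /-- the biorthogonal dual functions `ψ_z ∈ 𝒫¹(𝒯)`,
  `ψ_z|_{Ω(z)} = |Ω(z)|⁻¹((d+1)(d+2)η_z - (d+1))`, `supp ψ_z = Ω(z)` -/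
  psi : Vtx → S.L2
  /-- the characteristic function `χ_{Ω(z)}` of the vertex patch `Ω(z)` -/
  chiPatch : Vtx → S.L2
  /-- the patch volume `|Ω(z)|` -/
  volPatch : Vtx → ℝ
  volPatch_pos : ∀ z, 0 < volPatch z
  /-- piecewise constants `𝒫⁰(𝒯) ⊆ L²(Ω)` -/
  P0 : Submodule ℝ S.L2
  /-- the conforming space `𝒫¹(𝒯) ∩ H¹₀(Ω)` -/
  P1 : Submodule ℝ S.H10
  /-- the broken space `𝒫¹(𝒯) ⊆ L²(Ω)` of (discontinuous) piecewise affine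
  functions -/
  P1b : Submodule ℝ S.L2
  /-- the lowest-order Raviart–Thomas space `ℛ𝒯⁰(𝒯) ⊆ H(div;Ω)` -/
  RT0 : Submodule ℝ S.Hdiv
  /-- the `L²(Ω)`-orthogonal projection `Π_h⁰` onto `𝒫⁰(𝒯)` -/
  Pi0 : S.L2 →L[ℝ] S.L2
  Pi0_mem : ∀ g, Pi0 g ∈ P0
  Pi0_orth : ∀ g, ∀ p ∈ P0, ⟪g - Pi0 g , p⟫ = 0
  /-- the mesh-size weighted `L²(Ω)`-norm `g ↦ ‖h_𝒯 g‖` -/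
  normHT : S.L2 → ℝ
  normHT_nonneg : ∀ g, 0 ≤ normHT g
  normHT_le : ∀ g, normHT g ≤ h * ‖g‖
  /-- the piecewise (broken) gradient `∇_𝒯` on `𝒫¹(𝒯)` -/
  gradB : S.L2 →ₗ[ℝ] S.L2v
  /-- the quasi-interpolation operator
  `J_h : L²(Ω) → 𝒫¹(𝒯) ∩ H¹₀(Ω)`, `J_h v = Σ_{z∈𝒱₀} (v, ψ_z) η_z` -/
  Jh : S.L2 →ₗ[ℝ] S.H10
  Jh_mem : ∀ g, Jh g ∈ P1
  Jh_def : ∀ g, Jh g = ∑ z, ⟪g , psi z⟫ • hat z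
  /-- the bubble operator `B_h : L²(Ω) → H¹₀(Ω)`,
  `B_h v = Σ_{T∈𝒯} (v, χ_T) η_{b,T}` -/
  Bh : S.L2 →ₗ[ℝ] S.H10
  /-- the Fortin-type operator `P_h = J_h + B_h(1 - J_h)` -/
  Ph : S.L2 →ₗ[ℝ] S.H10
  Ph_def : ∀ g, Ph g = Jh g + Bh (g - S.inclH10 (Jh g))
  /-- the adjoint `P_h' : H^{-1}(Ω) → 𝒫¹(𝒯)` of `P_h` -/
  Ph' : (S.H10 →L[ℝ] ℝ) →ₗ[ℝ] S.L2
  Ph'_mem : ∀ φ, Ph' φ ∈ P1b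
  Ph'_adj : ∀ φ g, ⟪Ph' φ , g⟫ = φ (Ph g)
  /-- the quasi-interpolation projector `Π_h^div` onto `ℛ𝒯⁰(𝒯)` -/
  Pidiv : S.Hdiv →ₗ[ℝ] S.Hdiv
  Pidiv_mem : ∀ τ, Pidiv τ ∈ RT0
  /-- the commutativity property `div Π_h^div τ = Π_h⁰ div τ` -/
  Pidiv_comm : ∀ τ, S.dvg (Pidiv τ) = Pi0 (S.dvg τ)

attribute [instance] Mesh.instVtx

namespace Mesh

variable {S : PoissonSetting} (M : Mesh S)

/-- the regularization operator `Q_h = Π_h⁰ P_h'` -/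
def Qh (φ : S.Hm1) : S.L2 := M.Pi0 (M.Ph' φ)

/-- the mesh condition `s_z = z` for all interior vertices `z ∈ 𝒱₀` -/
def MeshCondition : Prop := ∀ z, M.patchCentroid z = M.vertexPos z

/-- `(u_h, σ_h)` is the first-order system least-squares (FOSLS) approximation
with load `g ∈ L²(Ω)`: it minimizes the least-squares functional
`‖∇v_h - τ_h‖² + ‖div τ_h + g‖²` over `W_h = (𝒫¹(𝒯) ∩ H¹₀(Ω)) × ℛ𝒯⁰(𝒯)`. -/
def IsFOSLS (g : S.L2) (uh : S.H10) (σh : S.Hdiv) : Prop :=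
  uh ∈ M.P1 ∧ σh ∈ M.RT0 ∧
  ∀ vh ∈ M.P1, ∀ τh ∈ M.RT0,
    ‖S.grad uh - S.inclHdiv σh‖ ^ 2 + ‖S.dvg σh + g‖ ^ 2 ≤
      ‖S.grad vh - S.inclHdiv τh‖ ^ 2 + ‖S.dvg τh + g‖ ^ 2

end Mesh

/-- **Lemma 3.3.**  For every `f ∈ H^{-1}(Ω)` one has
`‖(1 - P_h') f‖_{(H²(Ω) ∩ H¹₀(Ω))'} ≲ h · min_{f_h ∈ 𝒫⁰(𝒯)} ‖f - f_h‖_{H^{-1}(Ω)}`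
(the minimum over `f_h ∈ 𝒫⁰(𝒯)` is expressed by quantifying over all
`f_h ∈ 𝒫⁰(𝒯)`). -/
theorem PhAdj_dualH2_approx
    (S : PoissonSetting) {ι : Type} (Msh : ι → Mesh S)
    -- approximation property of the Fortin-type operator `P_h` (context):
    -- `‖(1 - P_h)v‖_{H¹(Ω)} ≲ h ‖v‖_{H²(Ω)}` for `v ∈ H²(Ω) ∩ H¹₀(Ω)`
    (hPh : ∃ C > 0, ∀ i, ∀ v : S.H10, S.memH2 v →
      S.normH1 (v - (Msh i).Ph (S.inclH10 v)) ≤ C * (Msh i).h * S.normH2 v)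
    -- idempotency of `P_h'` on piecewise constants (context)
    (hidem : ∀ i, ∀ g ∈ (Msh i).P0, (Msh i).Ph' (S.toHm1 g) = g) :
    ∃ C > 0, ∀ i, ∀ f : S.Hm1, ∀ fh ∈ (Msh i).P0,
      S.normH2dual (f - S.toHm1 ((Msh i).Ph' f)) ≤
        C * (Msh i).h * ‖f - S.toHm1 fh‖ := by
  obtain ⟨C, hC, hb⟩ := hPh
  refine ⟨C, hC, fun i f fh hfh => ?_⟩
  have hh := (Msh i).h_pos
  unfold PoissonSetting.normH2dual
  apply Real.sSup_le
  · rintro _ ⟨v, ⟨hv, hv1⟩, rfl⟩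
    set w := v - (Msh i).Ph (S.inclH10 v) with hw
    -- on `H²` functions, `(1 - P_h') f` acts as `(f - f_h) ∘ (1 - P_h)`
    have h1 : (f - S.toHm1 ((Msh i).Ph' f)) v = (f - S.toHm1 fh) w := by
      have e1 := (Msh i).Ph'_adj f (S.inclH10 v)
      have e2 := (Msh i).Ph'_adj (S.toHm1 fh) (S.inclH10 v)
      rw [hidem i fh hfh] at e2
      have e3 : ∀ (g : S.L2) (u : S.H10), S.toHm1 g u = ⟪g, S.inclH10 u⟫ := fun g u => rfl
      rw [ContinuousLinearMap.sub_apply, ContinuousLinearMap.sub_apply, hw, map_sub, map_sub,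
        ← e2, e3, e3, e1]
      ring
    have h2 : ‖w‖ ≤ S.normH1 w := by
      rw [S.norm_H10]
      apply Real.le_sqrt_of_sq_le
      nlinarith [sq_nonneg ‖S.inclH10 w‖]
    have h3 : ‖w‖ ≤ C * (Msh i).h := by
      refine (h2.trans (hb i v hv)).trans ?_
      exact mul_le_of_le_one_right (by positivity) hv1
    change |(f - S.toHm1 ((Msh i).Ph' f)) v| ≤ _
    rw [h1, ← Real.norm_eq_abs, mul_comm]
    exact ((f - S.toHm1 fh).le_opNorm w).trans
      (mul_le_mul_of_nonneg_left h3 (norm_nonneg _))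
  · positivity
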